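/- Let P be a strongly synchronizing core transducer over X_n satisfying SL3, let β be the canonical annotation of P (the unique annotation with value 0 at the first state in the canonical ordering), and let [P] be the minimal representative of P, with κ : Q_P → Q_{[P]} the induced map on states. Then the map α : Q_{[P]} → ℤ defined by α((q)κ) = |Λ(ε, q)| + β(q) is a well-defined annotation of [P], and the induced maps ([P], α) and (P, β) on X_n^ℤ are equal. -/

import Mathlib

/-!
Write `R` for `P` with its incomplete response removed, and `e q` for `|Λ(ε, q)|`.

* Since `Λ(ε, q)` is a prefix of `λ(w, q) Λ(ε, π(w, q))`, the output of `R` on `w` from `q` is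
  that word with its first `e q` letters deleted (`outs_removeIncomplete`).  Hence `e + β` is an
  annotation of `R`, and the infinite output of `R` from `q` is that of `P` from `q` with its
  first `e q` letters deleted (`hmap_removeIncomplete`).  In particular no state of `R` has
  incomplete response.
* When there is no incomplete response, the finite outputs from a state are determined by the map
  it induces on infinite sequences (`NoIncomplete.outs_eq`).  So ω-equivalent states of `R` have
  equal outputs and ω-equivalent successors, which makes `κ` a morphism from `R` to `[P]`; and
  reading a synchronizing word from two ω-equivalent states leads to the same state with the same
  output length, so `e + β` agrees on them (`Annotation.eq_of_hmap_eq`).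
* An annotation is bounded, so in the definition of `(L, α)` the output words tile `ℤ`.  Thus the
  coordinate `m` of the image of `x` is the letter number `m - i - α q` of the infinite output from
  the state `q` forced at `i`, for every sufficiently small `i` (`inducedMap_eq`).  Passing from
  `(P, β)` to `([P], α)` deletes `e q` letters of this infinite output and increases the annotation
  by `e q`, so the image is unchanged.
-/

/-!
Common definitions: transducers over a finite alphabet, strong synchronization,
cores, ω-equivalence, minimal representatives, the monoids `M_n`, `SL_n`, `SO_n`,
the groups `O_n`, `L_n`, annotations, and the two-sided full shift.

Throughout, the alphabet is `Fin (n + 2)`, i.e. an alphabet of size `n + 2 ≥ 2`.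
-/

namespace ShiftPaper

/-- The alphabet with `n + 2` letters. -/
abbrev A (n : ℕ) : Type := Fin (n + 2)

/-- Finite words over the alphabet. -/
abbrev Word (n : ℕ) : Type := List (A n)

/-- A transducer over the alphabet `A n`: a finite nonempty set of states together with a
transition function `tr` and an output function `out` (possibly asynchronous). -/
structure Transducer (n : ℕ) where
  Q : Type
  fin : Finite Q
  ne : Nonempty Q
  tr : A n → Q → Q
  out : A n → Q → Word n

variable {n : ℕ}

instance (T : Transducer n) : Finite T.Q := T.fin
instance (T : Transducer n) : Nonempty T.Q := T.ne

/-- Extended transition function, reading a finite word from left to right. -/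
def dsts (T : Transducer n) : Word n → T.Q → T.Q
  | [], q => q
  | a :: w, q => dsts T w (T.tr a q)

/-- Extended output function along a finite word. -/
def outs (T : Transducer n) : Word n → T.Q → Word n
  | [], _ => []
  | a :: w, q => T.out a q ++ outs T w (T.tr a q)

/-- Every (nonempty) circuit in the transducer has nonempty output. -/
def CircuitsNonempty (T : Transducer n) : Prop :=
  ∀ (q : T.Q) (w : Word n), w ≠ [] → dsts T w q = q → outs T w q ≠ []

/-- `T` is synchronizing at level `k`: the state reached after reading any word of
length `k` does not depend on the starting state. -/
def SyncAt (T : Transducer n) (k : ℕ) : Prop :=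
  ∀ w : Word n, w.length = k → ∀ p q : T.Q, dsts T w p = dsts T w q

/-- `T` is strongly synchronizing: synchronizing at some level. -/
def StronglySync (T : Transducer n) : Prop := ∃ k, SyncAt T k

/-- The minimal synchronizing level (junk value `0` if `T` is not strongly synchronizing). -/
noncomputable def syncLevel (T : Transducer n) : ℕ := by
  classical
  exact if h : StronglySync T then Nat.find h else 0

/-- The infinite output stream produced from state `q` on reading the infinite input `x`
(the map `h_q`).  (Well defined on transducers all of whose circuits have nonempty
output; junk values otherwise.) -/
noncomputable def hmap (T : Transducer n) (q : T.Q) (x : ℕ → A n) : ℕ → A n := fun m => by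
  classical
  exact if h : ∃ k, m < (outs T ((List.range k).map x) q).length then
    (outs T ((List.range h.choose).map x) q).getD m default
  else default

/-- ω-equality of transducers: a bijection of the state sets under which corresponding
states induce the same maps on infinite sequences. -/
def OmegaEq (T U : Transducer n) : Prop :=
  ∃ f : T.Q ≃ U.Q, ∀ q, hmap T q = hmap U (f q)

/-- The setoid on states given by ω-equivalence of states. -/
def omegaSetoid (T : Transducer n) : Setoid T.Q :=
  ⟨fun p q => hmap T p = hmap T q, ⟨fun _ => rfl, fun h => h.symm, fun h h' => h.trans h'⟩⟩

/-- The transducer obtained by identifying ω-equivalent states. -/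
noncomputable def quotT (T : Transducer n) : Transducer n where
  Q := Quotient (omegaSetoid T)
  fin := Finite.of_surjective (Quotient.mk (omegaSetoid T))
    fun c => ⟨Quotient.out c, Quotient.out_eq c⟩
  ne := ⟨Quotient.mk (omegaSetoid T) (Classical.choice T.ne)⟩
  tr := fun a c => Quotient.mk (omegaSetoid T) (T.tr a (Quotient.out c))
  out := fun a c => T.out a (Quotient.out c)

/-- `q` is a state of the core of `T`: it is forced by some word whose length is a
synchronizing level of `T`. -/
def CoreState (T : Transducer n) (q : T.Q) : Prop :=
  ∃ (k : ℕ) (w : Word n), SyncAt T k ∧ w.length = k ∧ ∀ p, dsts T w p = q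

/-- `T` is core: it equals its core. -/
def IsCore (T : Transducer n) : Prop := ∀ q : T.Q, CoreState T q

/-- Auxiliary predicate used to make the core construction total. -/
def CoreStateE (T : Transducer n) (q : T.Q) : Prop :=
  CoreState T q ∨ ∀ p, ¬ CoreState T p

/-- The core of `T` (as a transducer). -/
noncomputable def coreT (T : Transducer n) : Transducer n where
  Q := {q : T.Q // CoreStateE T q}
  fin := Subtype.finite
  ne := by
    classical
    by_cases h : ∀ p, ¬ CoreState T p
    · exact ⟨⟨Classical.choice T.ne, Or.inr h⟩⟩
    · push_neg at h
      obtain ⟨p, hp⟩ := h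
      exact ⟨⟨p, Or.inl hp⟩⟩
  tr := fun a q => by
    classical
    exact if h : CoreStateE T (T.tr a q.1) then ⟨T.tr a q.1, h⟩ else q
  out := fun a q => T.out a q.1

/-- There exist two inputs whose outputs from `q` disagree at position `j`. -/
def Disagree (T : Transducer n) (q : T.Q) (j : ℕ) : Prop :=
  ∃ x y : ℕ → A n, hmap T q x j ≠ hmap T q y j

/-- The extent of incomplete response of `q` (the length of `Λ(ε,q)`) is finite. -/
def FiniteExtent (T : Transducer n) (q : T.Q) : Prop := ∃ j, Disagree T q j

/-- The extent of incomplete response `|Λ(ε,q)|` of the state `q`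
(junk value `0` when it is infinite). -/
noncomputable def extentLen (T : Transducer n) (q : T.Q) : ℕ := by
  classical
  exact if h : FiniteExtent T q then Nat.find h else 0

/-- The word `Λ(ε,q)`: the greatest common prefix of all outputs from `q`. -/
noncomputable def extentWord (T : Transducer n) (q : T.Q) : Word n :=
  (List.range (extentLen T q)).map (hmap T q fun _ => default)

/-- `T` has no states of incomplete response (`Λ(ε,q) = ε` for every state `q`). -/
def NoIncomplete (T : Transducer n) : Prop := ∀ q : T.Q, Disagree T q 0

/-- No two distinct states of `T` are ω-equivalent. -/
def WeaklyMinimal (T : Transducer n) : Prop :=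
  ∀ p q : T.Q, hmap T p = hmap T q → p = q

/-- The Lipschitz condition (SL3): around any circuit the output is as long as the input. -/
def SL3 (T : Transducer n) : Prop :=
  ∀ (q : T.Q) (Γ : Word n), dsts T Γ q = q → (outs T Γ q).length = Γ.length

/-- `T` is synchronous: it writes exactly one letter for each letter read. -/
def Synchronous (T : Transducer n) : Prop :=
  ∀ (a : A n) (q : T.Q), (T.out a q).length = 1

/-- Boolean lexicographic comparison of words. -/
def lexLtB : Word n → Word n → Bool
  | [], [] => false
  | [], _ :: _ => true
  | _ :: _, [] => false
  | a :: u, b :: v => if a < b then true else if b < a then false else lexLtB u v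

/-- The lexicographically least rotation of a word. -/
def minimalRot (w : Word n) : Word n :=
  ((List.range w.length).map fun i => w.rotate i).foldl
    (fun acc r => if lexLtB r acc then r else acc) w

/-- A nonempty word is prime if it is not a power of a strictly shorter word. -/
def IsPrime (w : Word n) : Prop :=
  w ≠ [] ∧ ∀ (u : Word n) (k : ℕ), w = (List.replicate k u).flatten → w.length ≤ u.length

/-- `v` is a rotation of `u`. -/
def RotEq (u v : Word n) : Prop := ∃ i : ℕ, v = u.rotate i

/-- The prime word of which the (eventually constant single) image point of `T` is a power
(used for the degenerate transducers `Z_x`; junk values otherwise). -/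
noncomputable def periodicRoot (T : Transducer n) : Word n := by
  classical
  exact
    if hp : ∃ m, 0 < m ∧ ∀ j, hmap T (Classical.choice T.ne) (fun _ => default) (j + m) =
        hmap T (Classical.choice T.ne) (fun _ => default) j
    then (List.range (Nat.find hp)).map (hmap T (Classical.choice T.ne) fun _ => default)
    else [default]

/-- Remove the incomplete response from the states of `T`: replace the output `λ(a,q)` by
`Λ(a,q) - Λ(ε,q)`.  (In the degenerate case where the extents of incomplete response are
infinite, all outputs are replaced by the minimal rotation of the prime root of the unique
image point, so that minimising produces the transducer `Z_x` of the paper.) -/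
noncomputable def removeIncomplete (T : Transducer n) : Transducer n where
  Q := T.Q
  fin := T.fin
  ne := T.ne
  tr := T.tr
  out := fun a q => by
    classical
    exact if ∀ p : T.Q, FiniteExtent T p then
      (T.out a q ++ extentWord T (T.tr a q)).drop (extentLen T q)
    else minimalRot (periodicRoot T)

/-- The minimal representative `[T]` of a strongly synchronizing core transducer `T`:
remove incomplete response, take the core, and identify ω-equivalent states. -/
noncomputable def minRep (T : Transducer n) : Transducer n :=
  quotT (coreT (removeIncomplete T))

/-- The single state transducer `Z_x` which outputs `x` on every input letter. -/
def Zword (x : Word n) : Transducer n where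
  Q := PUnit
  fin := inferInstance
  ne := ⟨PUnit.unit⟩
  tr := fun _ q => q
  out := fun _ _ => x

/-- The single state identity transducer. -/
def oneT : Transducer n where
  Q := PUnit
  fin := inferInstance
  ne := ⟨PUnit.unit⟩
  tr := fun _ q => q
  out := fun a _ => [a]

/-- The product transducer `T * U`: the outputs of `T` are processed by `U`. -/
noncomputable def prodT (T U : Transducer n) : Transducer n where
  Q := T.Q × U.Q
  fin := inferInstance
  ne := ⟨⟨Classical.choice T.ne, Classical.choice U.ne⟩⟩
  tr := fun a p => (T.tr a p.1, dsts U (T.out a p.1) p.2)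
  out := fun a p => outs U (T.out a p.1) p.2

/-- The product in `M_n`: the minimal representative of the core of `T * U`. -/
noncomputable def mulT (T U : Transducer n) : Transducer n :=
  minRep (coreT (prodT T U))

/-- Membership in the monoid `M_n` of minimal, strongly synchronizing, core transducers
(a transducer is minimal if it is core, has no states of incomplete response and no two
distinct ω-equivalent states, or it is one of the degenerate transducers `Z_x` for a prime
word `x` which is least in its rotation class). -/
def MnMem (T : Transducer n) : Prop :=
  CircuitsNonempty T ∧ StronglySync T ∧ IsCore T ∧
    ((NoIncomplete T ∧ WeaklyMinimal T) ∨
      ∃ x : Word n, IsPrime x ∧ minimalRot x = x ∧ OmegaEq T (Zword x))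

/-- Membership in the monoid `SL_n`: elements of `M_n` satisfying the Lipschitz condition. -/
def SLnMem (T : Transducer n) : Prop := MnMem T ∧ SL3 T

/-- Membership in the monoid `SO_n`: elements of `M_n` all of whose states induce injective
maps with clopen image. -/
def SOnMem (T : Transducer n) : Prop :=
  MnMem T ∧ ∀ q : T.Q, Function.Injective (hmap T q) ∧ IsClopen (Set.range (hmap T q))

/-- Membership in the group `O_n`: invertible elements of `SO_n` (with inverse in `SO_n`);
equality in `M_n` is ω-equality. -/
def OnMem (T : Transducer n) : Prop :=
  SOnMem T ∧ ∃ U : Transducer n, SOnMem U ∧ OmegaEq (mulT T U) oneT ∧ OmegaEq (mulT U T) oneT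

/-- Membership in the group `L_n = O_n ∩ SL_n`. -/
def LnMem (T : Transducer n) : Prop := OnMem T ∧ SL3 T

/-- Membership in the monoid `\widetilde{P}_n` of weakly minimal, synchronous, strongly
synchronizing core transducers. -/
def PtildeMem (T : Transducer n) : Prop :=
  CircuitsNonempty T ∧ StronglySync T ∧ IsCore T ∧ Synchronous T ∧ WeaklyMinimal T

/-- The product in `\widetilde{P}_n`: take the product transducer, identify ω-equivalent
states and take the core. -/
noncomputable def ptildeMul (P R : Transducer n) : Transducer n :=
  coreT (quotT (prodT P R))

/-- An annotation of (a strongly synchronizing core transducer satisfying the Lipschitz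
condition) `T`. -/
def Annotation (T : Transducer n) (α : T.Q → ℤ) : Prop :=
  ∀ (q : T.Q) (Γ : Word n),
    α (dsts T Γ q) = α q + ((outs T Γ q).length : ℤ) - (Γ.length : ℤ)

/-! ### The two-sided full shift -/

/-- The space of bi-infinite sequences over the alphabet `A n`. -/
abbrev FullShift (n : ℕ) : Type := ℤ → A n

/-- The `i`-th power of the shift map: `(shiftZ i x) j = x (j - i)`.
The shift `σ` itself is `shiftZ 1`. -/
def shiftZ (i : ℤ) (x : FullShift n) : FullShift n := fun j => x (j - i)

/-- The monoid of endomorphisms of the shift dynamical system: continuous maps on the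
space of bi-infinite sequences commuting with the shift. -/
def EndShift (n : ℕ) : Type :=
  {f : FullShift n → FullShift n // Continuous f ∧ ∀ x, f (shiftZ 1 x) = shiftZ 1 (f x)}

/-- The group of automorphisms of the shift dynamical system: homeomorphisms of the
space of bi-infinite sequences commuting with the shift. -/
def AutShift (n : ℕ) : Type :=
  {f : FullShift n → FullShift n // Continuous f ∧ (∀ x, f (shiftZ 1 x) = shiftZ 1 (f x)) ∧
    ∃ g : FullShift n → FullShift n, Continuous g ∧ (∀ x, g (f x) = x) ∧ ∀ x, f (g x) = x}

/-- The window `x_{i-k} … x_{i-1}` of a bi-infinite sequence. -/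
def window (x : FullShift n) (i : ℤ) (k : ℕ) : Word n :=
  (List.range k).map fun j => x (i - (k : ℤ) + (j : ℤ))

/-- The state of `L` forced by the window `x_{i-k} … x_{i-1}`. -/
noncomputable def forced (L : Transducer n) (k : ℕ) (x : FullShift n) (i : ℤ) : L.Q :=
  dsts L (window x i k) (Classical.choice L.ne)

/-- The output word written while processing the letter `x i`. -/
noncomputable def outAt (L : Transducer n) (k : ℕ) (x : FullShift n) (i : ℤ) : Word n :=
  L.out (x i) (forced L k x i)

/-- The defining specification of the map `(L, α) : X_n^ℤ → X_n^ℤ` induced by an annotated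
transducer: for each index `i`, with `q` the state forced by `x_{i-k} … x_{i-1}` and
`w = λ(x_i, q)`, the word `w` occupies the coordinates `i + α q, …, i + α q + |w| - 1`
of the image sequence `y`. -/
def SpecAt (L : Transducer n) (α : L.Q → ℤ) (k : ℕ) (x y : FullShift n) : Prop :=
  ∀ (i : ℤ) (j : ℕ), j < (outAt L k x i).length →
    y (i + α (forced L k x i) + (j : ℤ)) = (outAt L k x i).getD j default

/-- The map `(L, α) : X_n^ℤ → X_n^ℤ` induced by an annotated transducer. -/
noncomputable def inducedMap (L : Transducer n) (α : L.Q → ℤ) (k : ℕ) :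
    FullShift n → FullShift n := fun x m => by
  classical
  exact if h : ∃ p : ℤ × ℕ, p.2 < (outAt L k x p.1).length ∧
      p.1 + α (forced L k x p.1) + (p.2 : ℤ) = m then
    (outAt L k x h.choose.1).getD h.choose.2 default
  else default

/-- The map `κ` from the states of `T` to the states of its minimal representative. -/
noncomputable def kappa (T : Transducer n) (q : T.Q) : (minRep T).Q := by
  classical
  exact Quotient.mk (omegaSetoid (coreT (removeIncomplete T)))
    (if h : CoreStateE (removeIncomplete T) q then
      (⟨q, h⟩ : (coreT (removeIncomplete T)).Q)
    else Classical.choice (coreT (removeIncomplete T)).ne)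

/-- The annotation `\overline{α + β}` of the product `LM` in `SL_n`: its value at the
state `κ (s, t)` is `α s + β t + |Λ(ε, (s,t))|`, the extent of incomplete response being
computed in `core (L * M)`. -/
noncomputable def annProd (L M : Transducer n) (α : L.Q → ℤ) (β : M.Q → ℤ) :
    (mulT L M).Q → ℤ := fun c =>
  α (Quotient.out c).1.1.1 + β (Quotient.out c).1.1.2 +
    (extentLen (coreT (prodT L M)) (Quotient.out c).1 : ℤ)

/-- The set `ASL_n` of annotated transducers: pairs of a transducer and an integer-valued
function on its states. -/
def ASLPair (n : ℕ) := Σ T : Transducer n, T.Q → ℤ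

/-- Membership in `ASL_n`: either the transducer is in `SL_n` with no states of incomplete
response and the function is an annotation of it, or it is a degenerate `Z_a` for a letter
`a` (whose `annotation ∞` we model by allowing an arbitrary function). -/
def ASLMem (p : ASLPair n) : Prop :=
  (SLnMem p.1 ∧ NoIncomplete p.1 ∧ Annotation p.1 p.2) ∨ ∃ a : A n, OmegaEq p.1 (Zword [a])

/-- Equality in `ASL_n`: ω-equality of the transducers matching up the annotations, with
the two elements possibly both being the degenerate `(Z_a, ∞)` for the same letter `a`. -/
def ASLEq (p q : ASLPair n) : Prop :=
  (∃ f : p.1.Q ≃ q.1.Q, (∀ s, hmap p.1 s = hmap q.1 (f s)) ∧ ∀ s, q.2 (f s) = p.2 s) ∨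
    ∃ a : A n, OmegaEq p.1 (Zword [a]) ∧ OmegaEq q.1 (Zword [a])

/-- The product on `ASL_n`: `(L, α)(M, β) = (LM, \overline{α + β})`. -/
noncomputable def ASLmul (p q : ASLPair n) : ASLPair n :=
  ⟨mulT p.1 q.1, annProd p.1 q.1 p.2 q.2⟩

/-- The identity `(1, 0)` of `ASL_n`. -/
def ASLone : ASLPair n := ⟨oneT, fun _ => 0⟩

/-- Membership in `AL_n`: annotated elements of `L_n`. -/
def ALMem (p : ASLPair n) : Prop := LnMem p.1 ∧ Annotation p.1 p.2

/-- The element `([P], α)` of `ASL_n` with `α ((q) κ) = i + |Λ(ε, q)|`, associated to the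
endomorphism `σ^i ∘ f_P`. -/
noncomputable def phiPair (P : Transducer n) (i : ℤ) : ASLPair n :=
  ⟨minRep P, fun c => i + (extentLen P (Quotient.out c).1 : ℤ)⟩

/-- The unique state at the base of a circuit labelled `Γ` (junk value if there is none). -/
noncomputable def qcirc (T : Transducer n) (Γ : Word n) : T.Q := by
  classical
  exact if h : ∃ q, dsts T Γ q = q then h.choose else Classical.choice T.ne

/-- The prime root of a word: the prime word of which `w` is a power
(junk value `w` if there is none). -/
noncomputable def primeRoot (w : Word n) : Word n := by
  classical
  exact if h : ∃ u : Word n, IsPrime u ∧ ∃ k, w = (List.replicate k u).flatten then h.choose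
  else w

/-- The action of `T ∈ M_n` on (rotation classes of) prime words: `Γ` is sent to the prime
word of which `λ(Γ, q_Γ)` is a power, where `q_Γ` is the unique state with a circuit
labelled `Γ` based at it. -/
noncomputable def PiAct (T : Transducer n) (Γ : Word n) : Word n :=
  primeRoot (outs T Γ (qcirc T Γ))

/-- The cylinder set of one-sided infinite sequences with prefix `ν`. -/
def Cyl (ν : Word n) : Set (ℕ → A n) :=
  {x | ∀ (j : ℕ) (h : j < ν.length), x j = ν.get ⟨j, h⟩}

/-- `m_q = |B(q)|`: the least cardinality of a finite set of words whose cylinders are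
contained in, and together cover, the image of `h_q`. -/
noncomputable def mq (T : Transducer n) (q : T.Q) : ℕ :=
  sInf {m : ℕ | ∃ S : Finset (Word n), S.card = m ∧
    (∀ ν ∈ S, Cyl ν ⊆ Set.range (hmap T q)) ∧
    (⋃ ν ∈ S, Cyl ν) = Set.range (hmap T q)}

/-- The signature homomorphism `sig : O_n → (ℤ/(n-1))^×`, as an element of `ℤ/(n-1)`
(for our alphabet of size `n + 2`, the modulus is `n + 1`). -/
noncomputable def sigT (T : Transducer n) : ZMod (n + 1) :=
  (mq T (Classical.choice T.ne) : ZMod (n + 1))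


/-! ### Finite words and infinite outputs -/

section Streams

variable (T : Transducer n)

theorem dsts_append (u v : Word n) (q : T.Q) :
    dsts T (u ++ v) q = dsts T v (dsts T u q) := by
  induction u generalizing q with
  | nil => rfl
  | cons a u ih => exact ih _

theorem outs_append (u v : Word n) (q : T.Q) :
    outs T (u ++ v) q = outs T u q ++ outs T v (dsts T u q) := by
  induction u generalizing q with
  | nil => rfl
  | cons a u ih => simp [outs, dsts, ih]

/-- The prefix of length `k` of an infinite sequence. -/
def pre (x : ℕ → A n) (k : ℕ) : Word n := (List.range k).map x

/-- The infinite sequence `w x` obtained by putting the finite word `w` in front of `x`. -/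
def app (w : Word n) (x : ℕ → A n) : ℕ → A n := fun i =>
  if i < w.length then w.getD i default else x (i - w.length)

theorem pre_add (x : ℕ → A n) (k l : ℕ) :
    pre x (k + l) = pre x k ++ pre (fun i => x (k + i)) l := by
  simp [pre, List.range_add, Function.comp_def]

theorem pre_app (w : Word n) (x : ℕ → A n) (k : ℕ) :
    pre (app w x) (w.length + k) = w ++ pre x k := by
  rw [pre_add]
  congr 1
  · apply List.ext_getElem
    · simp [pre]
    · intro i h1 h2
      simp [pre, app, h2]
  · simp [pre, app]

variable {T}

/-- The letters of the infinite output may be read off from any sufficiently long finite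
output. -/
theorem hmap_eq {q : T.Q} {x : ℕ → A n} {m k : ℕ} (h : m < (outs T (pre x k) q).length) :
    hmap T q x m = (outs T (pre x k) q).getD m default := by
  have key : ∀ k l : ℕ, k ≤ l → m < (outs T (pre x k) q).length →
      (outs T (pre x l) q).getD m default = (outs T (pre x k) q).getD m default := by
    intro k l hkl hm
    obtain ⟨d, rfl⟩ := Nat.exists_eq_add_of_le hkl
    rw [pre_add, outs_append, List.getD_append _ _ _ _ hm]
  have hex : ∃ k, m < (outs T ((List.range k).map x) q).length := ⟨k, h⟩
  have h2 : hmap T q x m = (outs T (pre x hex.choose) q).getD m default := by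
    unfold hmap
    rw [dif_pos hex]
    rfl
  rw [h2]
  rcases le_total k hex.choose with h' | h'
  · exact key _ _ h' h
  · exact (key _ _ h' hex.choose_spec).symm

variable (T) in
/-- Every infinite input yields an infinite output. -/
def Unb : Prop := ∀ (q : T.Q) (x : ℕ → A n) (m : ℕ), ∃ k, m < (outs T (pre x k) q).length

theorem hmap_app_lt {q : T.Q} (w : Word n) (x : ℕ → A n) {m : ℕ}
    (h : m < (outs T w q).length) : hmap T q (app w x) m = (outs T w q).getD m default := by
  have e : pre (app w x) w.length = w := by simpa [pre] using pre_app w x 0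
  have := hmap_eq (T := T) (q := q) (x := app w x) (m := m) (k := w.length) (by rwa [e])
  rwa [e] at this

theorem hmap_app_add (hT : Unb T) {q : T.Q} (w : Word n) (x : ℕ → A n) (m : ℕ) :
    hmap T q (app w x) ((outs T w q).length + m) = hmap T (dsts T w q) x m := by
  obtain ⟨k, hk⟩ := hT (dsts T w q) x m
  have e : outs T (pre (app w x) (w.length + k)) q
      = outs T w q ++ outs T (pre x k) (dsts T w q) := by rw [pre_app, outs_append]
  rw [hmap_eq hk, hmap_eq (k := w.length + k) (by rw [e, List.length_append]; omega), e,
    List.getD_append_right _ _ _ _ (by omega)]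
  simp

theorem Annotation.of_letters {α : T.Q → ℤ}
    (h : ∀ a q, α (T.tr a q) = α q + ((T.out a q).length : ℤ) - 1) : Annotation T α := by
  intro q w
  induction w generalizing q with
  | nil => simp [dsts, outs]
  | cons a w ih =>
    simp only [dsts, outs, ih, h, List.length_append, List.length_cons]
    push_cast
    ring

theorem Annotation.bounded (α : T.Q → ℤ) : ∃ C : ℤ, ∀ q, |α q| ≤ C := by
  obtain ⟨C, hC⟩ := (Set.finite_range fun q => |α q|).bddAbove
  exact ⟨C, fun q => hC ⟨q, rfl⟩⟩

/-- An annotation is bounded, so input and output lengths differ by a bounded amount. -/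
theorem Annotation.unb {α : T.Q → ℤ} (h : Annotation T α) : Unb T := by
  intro q x m
  obtain ⟨C, hC⟩ := Annotation.bounded α
  refine ⟨m + 1 + (2 * C).toNat, ?_⟩
  have h1 := h q (pre x (m + 1 + (2 * C).toNat))
  have h2 : (pre x (m + 1 + (2 * C).toNat)).length = m + 1 + (2 * C).toNat := by simp [pre]
  rw [h2] at h1
  have h3 := abs_le.1 (hC q)
  have h4 := abs_le.1 (hC (dsts T (pre x (m + 1 + (2 * C).toNat)) q))
  push_cast at h1
  omega

/-! ### Transducers without incomplete response -/

/-- Without incomplete response, `λ(w, q)` is the greatest common prefix of the infinite outputs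
from `q` on inputs starting with `w`; so it depends only on the map induced by `q`. -/
theorem NoIncomplete.outs_eq (hT : Unb T) (hN : NoIncomplete T) {p q : T.Q}
    (h : hmap T p = hmap T q) (w : Word n) : outs T w p = outs T w q := by
  have key : ∀ {p q : T.Q}, hmap T p = hmap T q →
      (outs T w p).length ≤ (outs T w q).length := by
    intro p q h
    by_contra! hlt
    -- The outputs from `q` after `w` disagree at their first letter, but from `p` that letter
    -- is already determined by `w`.
    obtain ⟨x, y, hxy⟩ := hN (dsts T w q)
    apply hxy
    rw [← hmap_app_add hT, ← hmap_app_add hT, ← h, Nat.add_zero, hmap_app_lt w x hlt,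
      hmap_app_lt w y hlt]
  have hl : (outs T w p).length = (outs T w q).length := le_antisymm (key h) (key h.symm)
  apply List.ext_getElem hl
  intro i h1 h2
  have e1 := hmap_app_lt w (fun _ => default) h1
  have e2 := hmap_app_lt w (fun _ => default) h2
  rw [h, e2, List.getD_eq_getElem _ _ h1, List.getD_eq_getElem _ _ h2] at e1
  exact e1.symm

theorem NoIncomplete.hmap_dsts_eq (hT : Unb T) (hN : NoIncomplete T) {p q : T.Q}
    (h : hmap T p = hmap T q) (w : Word n) : hmap T (dsts T w p) = hmap T (dsts T w q) := by
  funext x m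
  rw [← hmap_app_add hT, ← hmap_app_add hT, h, hN.outs_eq hT h]

/-- A synchronizing word brings two ω-equivalent states to the same state with outputs of the
same length, so an annotation agrees on them. -/
theorem Annotation.eq_of_hmap_eq {α : T.Q → ℤ} (h : Annotation T α) (hN : NoIncomplete T)
    (hS : StronglySync T) {p q : T.Q} (hpq : hmap T p = hmap T q) : α p = α q := by
  obtain ⟨k, hk⟩ := hS
  have h1 := h p (List.replicate k default)
  have h2 := h q (List.replicate k default)
  rw [hN.outs_eq h.unb hpq, hk _ (by simp) p q] at h1
  omega

end Streams

/-! ### Removing incomplete response -/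

section Remove

variable {P : Transducer n}

theorem extentLen_spec {q : P.Q} (h : FiniteExtent P q) : Disagree P q (extentLen P q) := by
  classical
  unfold extentLen
  rw [dif_pos h]
  exact Nat.find_spec h

theorem extentLen_le {q : P.Q} {j : ℕ} (h : Disagree P q j) : extentLen P q ≤ j := by
  classical
  have h' : FiniteExtent P q := ⟨j, h⟩
  unfold extentLen
  rw [dif_pos h']
  exact Nat.find_le h

theorem hmap_agree {q : P.Q} {j : ℕ} (h : j < extentLen P q) (x y : ℕ → A n) :
    hmap P q x j = hmap P q y j := by
  by_contra hne
  exact absurd (extentLen_le ⟨x, y, hne⟩) (by omega)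

theorem length_extentWord (q : P.Q) : (extentWord P q).length = extentLen P q := by
  simp [extentWord]

theorem extentLen_le_add (hP : Unb P) (hfin : ∀ q : P.Q, FiniteExtent P q) (w : Word n)
    (q : P.Q) : extentLen P q ≤ (outs P w q).length + extentLen P (dsts P w q) := by
  obtain ⟨x, y, hxy⟩ := extentLen_spec (hfin (dsts P w q))
  refine extentLen_le ⟨app w x, app w y, ?_⟩
  rwa [hmap_app_add hP, hmap_app_add hP]

/-- `Λ(ε, q)` is a prefix of `λ(w, q) Λ(ε, π(w, q))`. -/
theorem take_extent (hP : Unb P) (hfin : ∀ q : P.Q, FiniteExtent P q) (w : Word n) (q : P.Q) :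
    (outs P w q ++ extentWord P (dsts P w q)).take (extentLen P q) = extentWord P q := by
  have hle := extentLen_le_add hP hfin w q
  apply List.ext_getElem
  · simp [length_extentWord, hle]
  · intro j h1 h2
    rw [length_extentWord] at h2
    rw [List.getElem_take]
    have hr : (extentWord P q)[j]'(by rwa [length_extentWord]) =
        hmap P q (app w fun _ => default) j := by
      simp only [extentWord, List.getElem_map, List.getElem_range]
      exact hmap_agree h2 _ _
    rw [hr]
    by_cases hj : j < (outs P w q).length
    · rw [List.getElem_append_left hj, hmap_app_lt w _ hj, List.getD_eq_getElem _ _ hj]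
    · rw [List.getElem_append_right (by omega)]
      obtain ⟨d, rfl⟩ := Nat.exists_eq_add_of_le (not_lt.1 hj)
      rw [hmap_app_add hP]
      simp [extentWord]

variable (P) in
/-- A state of `P` seen as a state of `removeIncomplete P`, which has the same states. -/
def toR (q : P.Q) : (removeIncomplete P).Q := q

variable (P) in
/-- A state of `removeIncomplete P` seen as a state of `P`. -/
def ofR (q : (removeIncomplete P).Q) : P.Q := q

theorem toR_surj (q : (removeIncomplete P).Q) : ∃ p : P.Q, toR P p = q := ⟨ofR P q, rfl⟩

@[simp] theorem ofR_toR (q : P.Q) : ofR P (toR P q) = q := rfl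

@[simp] theorem removeIncomplete_tr (a : A n) (q : P.Q) :
    (removeIncomplete P).tr a (toR P q) = toR P (P.tr a q) := rfl

theorem dsts_removeIncomplete (w : Word n) (q : P.Q) :
    dsts (removeIncomplete P) w (toR P q) = toR P (dsts P w q) := by
  induction w generalizing q with
  | nil => rfl
  | cons a w ih => exact ih _

theorem out_removeIncomplete (hfin : ∀ q : P.Q, FiniteExtent P q) (a : A n) (q : P.Q) :
    (removeIncomplete P).out a (toR P q) =
      (P.out a q ++ extentWord P (P.tr a q)).drop (extentLen P q) :=
  if_pos hfin

theorem outs_removeIncomplete (hP : Unb P) (hfin : ∀ q : P.Q, FiniteExtent P q) (w : Word n)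
    (q : P.Q) : outs (removeIncomplete P) w (toR P q) =
      (outs P w q ++ extentWord P (dsts P w q)).drop (extentLen P q) := by
  induction w generalizing q with
  | nil => simp [outs, dsts, ← length_extentWord]
  | cons a w ih =>
    have h1 := extentLen_le_add hP hfin [a] q
    simp only [outs, dsts, List.append_nil] at h1
    simp only [outs, dsts, removeIncomplete_tr]
    rw [ih, out_removeIncomplete hfin,
      ← List.drop_append_of_le_length (by rw [List.length_append, length_extentWord]; exact h1),
      List.append_assoc]
    conv_lhs => rw [← take_extent hP hfin w (P.tr a q), List.take_append_drop]
    simp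

theorem hmap_removeIncomplete (hP : Unb P) (hfin : ∀ q : P.Q, FiniteExtent P q) (q : P.Q)
    (x : ℕ → A n) (m : ℕ) :
    hmap (removeIncomplete P) (toR P q) x m = hmap P q x (extentLen P q + m) := by
  obtain ⟨k, hk⟩ := hP q x (extentLen P q + m)
  have e := outs_removeIncomplete hP hfin (pre x k) q
  rw [hmap_eq hk, hmap_eq (T := removeIncomplete P) (k := k)
    (by rw [e, List.length_drop, List.length_append]; omega), e]
  rw [← List.getD_append _ (extentWord P (dsts P (pre x k) q)) _ _ hk]
  simp [List.getD_eq_getElem?_getD]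

theorem noIncomplete_removeIncomplete (hP : Unb P) (hfin : ∀ q : P.Q, FiniteExtent P q) :
    NoIncomplete (removeIncomplete P) := by
  intro q
  obtain ⟨q, rfl⟩ := toR_surj q
  obtain ⟨x, y, hxy⟩ := extentLen_spec (hfin q)
  refine ⟨x, y, ?_⟩
  rwa [hmap_removeIncomplete hP hfin, hmap_removeIncomplete hP hfin]

theorem annotation_removeIncomplete (hfin : ∀ q : P.Q, FiniteExtent P q)
    {β : P.Q → ℤ} (hβ : Annotation P β) :
    Annotation (removeIncomplete P) fun q => (extentLen P (ofR P q) : ℤ) + β (ofR P q) := by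
  apply Annotation.of_letters
  intro a q
  obtain ⟨q, rfl⟩ := toR_surj q
  have h1 := extentLen_le_add hβ.unb hfin [a] q
  have h2 := hβ q [a]
  simp only [outs, dsts, List.append_nil, List.length_singleton] at h1 h2
  simp only [out_removeIncomplete hfin, List.length_drop, List.length_append, length_extentWord,
    removeIncomplete_tr, ofR_toR]
  rw [h2]
  omega

theorem syncAt_removeIncomplete {k : ℕ} : SyncAt (removeIncomplete P) k ↔ SyncAt P k :=
  forall₂_congr fun w _ => forall₂_congr fun p q => by
    obtain ⟨p, rfl⟩ := toR_surj p
    obtain ⟨q, rfl⟩ := toR_surj q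
    rw [dsts_removeIncomplete, dsts_removeIncomplete]
    rfl

theorem coreStateE_removeIncomplete (h : IsCore P) (q : P.Q) :
    CoreStateE (removeIncomplete P) (toR P q) := by
  obtain ⟨k, w, hk, hw, hq⟩ := h q
  exact Or.inl ⟨k, w, syncAt_removeIncomplete.2 hk, hw,
    fun p => (dsts_removeIncomplete w (ofR P p)).trans (congrArg (toR P) (hq (ofR P p)))⟩

end Remove

/-! ### Morphisms of transducers and the map `κ` -/

section Morphism

/-- A map of states commuting with transitions and preserving outputs. -/
structure IsMor (T U : Transducer n) (f : T.Q → U.Q) : Prop where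
  tr : ∀ a q, U.tr a (f q) = f (T.tr a q)
  out : ∀ a q, U.out a (f q) = T.out a q

variable {T U : Transducer n} {f : T.Q → U.Q}

theorem IsMor.dsts (h : IsMor T U f) (w : Word n) (q : T.Q) :
    ShiftPaper.dsts U w (f q) = f (ShiftPaper.dsts T w q) := by
  induction w generalizing q with
  | nil => rfl
  | cons a w ih => simp only [ShiftPaper.dsts, h.tr, ih]

theorem IsMor.outs (h : IsMor T U f) (w : Word n) (q : T.Q) :
    ShiftPaper.outs U w (f q) = ShiftPaper.outs T w q := by
  induction w generalizing q with
  | nil => rfl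
  | cons a w ih => simp only [ShiftPaper.outs, h.tr, h.out, ih]

theorem IsMor.hmap (h : IsMor T U f) (q : T.Q) :
    ShiftPaper.hmap U (f q) = ShiftPaper.hmap T q := by
  have e : (fun w => ShiftPaper.outs U w (f q)) = fun w => ShiftPaper.outs T w q :=
    funext fun w => h.outs w q
  exact congrArg (fun (o : Word n → Word n) (x : ℕ → A n) (m : ℕ) =>
    open Classical in
    if h : ∃ k, m < (o ((List.range k).map x)).length then
      (o ((List.range h.choose).map x)).getD m default
    else default) e

variable {P : Transducer n}

/-- A state of `P` seen as a state of the core of `removeIncomplete P`. -/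
def toC (hc : IsCore P) (q : P.Q) : (coreT (removeIncomplete P)).Q :=
  ⟨toR P q, coreStateE_removeIncomplete hc q⟩

/-- A representative in `P` of a state of `[P]`, chosen as in the construction of the
quotient. -/
noncomputable def rep (c : (minRep P).Q) : P.Q :=
  (Quotient.out (s := omegaSetoid (coreT (removeIncomplete P))) c).1

theorem kappa_eq_mk (hc : IsCore P) (q : P.Q) : kappa P q =
    Quotient.mk (omegaSetoid (coreT (removeIncomplete P))) (toC hc q) :=
  congrArg (Quotient.mk (omegaSetoid (coreT (removeIncomplete P))))
    (dif_pos (coreStateE_removeIncomplete hc q))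

theorem isMor_toC (hc : IsCore P) :
    IsMor (removeIncomplete P) (coreT (removeIncomplete P)) fun q => toC hc (ofR P q) where
  tr a q := dif_pos (coreStateE_removeIncomplete hc (P.tr a (ofR P q)))
  out _ _ := rfl

theorem kappa_eq_iff (hc : IsCore P) (p q : P.Q) : kappa P p = kappa P q ↔
    hmap (removeIncomplete P) (toR P p) = hmap (removeIncomplete P) (toR P q) := by
  rw [kappa_eq_mk hc, kappa_eq_mk hc, ← (isMor_toC hc).hmap, ← (isMor_toC hc).hmap]
  exact Quotient.eq (r := omegaSetoid (coreT (removeIncomplete P)))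

theorem kappa_rep (hc : IsCore P) (c : (minRep P).Q) : kappa P (rep c) = c :=
  (kappa_eq_mk hc _).trans
    (Quotient.out_eq (s := omegaSetoid (coreT (removeIncomplete P))) c)

theorem minRep_tr (hc : IsCore P) (a : A n) (c : (minRep P).Q) :
    (minRep P).tr a c = kappa P (P.tr a (rep c)) :=
  (congrArg (Quotient.mk (omegaSetoid (coreT (removeIncomplete P))))
    ((isMor_toC hc).tr a (toR P (rep c)))).trans (kappa_eq_mk hc _).symm

theorem minRep_out (a : A n) (c : (minRep P).Q) :
    (minRep P).out a c = (removeIncomplete P).out a (toR P (rep c)) := rfl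

/-- `κ` is a morphism because ω-equivalent states have equal outputs and ω-equivalent
successors once the incomplete response is removed. -/
theorem isMor_kappa (hc : IsCore P) (hR : Unb (removeIncomplete P))
    (hN : NoIncomplete (removeIncomplete P)) :
    IsMor (removeIncomplete P) (minRep P) fun q => kappa P (ofR P q) := by
  have hrep : ∀ q : P.Q, hmap (removeIncomplete P) (toR P (rep (kappa P q))) =
      hmap (removeIncomplete P) (toR P q) := fun q =>
    (kappa_eq_iff hc _ _).1 (kappa_rep hc _)
  constructor
  · intro a q
    obtain ⟨q, rfl⟩ := toR_surj q
    rw [removeIncomplete_tr, ofR_toR, ofR_toR, minRep_tr hc, kappa_eq_iff hc]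
    exact hN.hmap_dsts_eq hR (hrep q) [a]
  · intro a q
    obtain ⟨q, rfl⟩ := toR_surj q
    have := hN.outs_eq hR (hrep q) [a]
    simp only [outs, List.append_nil] at this
    rw [ofR_toR, minRep_out, this]

end Morphism

/-! ### The map induced on the full shift -/

section Shift

variable {L : Transducer n} {α : L.Q → ℤ} {k : ℕ}

/-- In the definition of `window` the index is an integer, so `List.range k` is coerced there to a
list of integers by a monadic lift; here the index is a natural number. -/
theorem window_eq (x : FullShift n) (i : ℤ) (k : ℕ) :
    window x i k = (List.range k).map fun j : ℕ => x (i - k + j) := by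
  simp [window, ← List.map_eq_flatMap]

theorem window_append (x : FullShift n) (i : ℤ) (k : ℕ) :
    window x i k ++ [x i] = x (i - k) :: window x (i + 1) k := by
  apply List.ext_getElem
  · simp [window_eq]
  · intro j h1 h2
    rcases j with _ | j
    · rcases k with _ | k
      · simp [window_eq]
      · simp [window_eq]
    · simp only [List.length_append, window_eq, List.length_map, List.length_range,
        List.length_singleton] at h1
      rw [List.getElem_cons_succ]
      by_cases hj : j + 1 < k
      · rw [List.getElem_append_left (by simpa [window_eq] using hj)]
        simp only [window_eq, List.getElem_map, List.getElem_range]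
        congr 1
        push_cast
        ring
      · obtain rfl : k = j + 1 := by omega
        rw [List.getElem_append_right (by simp [window_eq])]
        simp [window_eq]

theorem forced_succ (hk : SyncAt L k) (x : FullShift n) (i : ℤ) :
    forced L k x (i + 1) = L.tr (x i) (forced L k x i) := by
  have h : dsts L (window x i k ++ [x i]) (Classical.choice L.ne) =
      L.tr (x i) (forced L k x i) := by
    rw [dsts_append]
    rfl
  rw [← h, window_append]
  exact hk _ (by simp [window_eq]) _ _

/-- The one-sided sequence `x_i x_{i+1} …`. -/
def tail (x : FullShift n) (i : ℤ) : ℕ → A n := fun j => x (i + j)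

theorem forced_add (hk : SyncAt L k) (x : FullShift n) (i : ℤ) (d : ℕ) :
    forced L k x (i + d) = dsts L (pre (tail x i) d) (forced L k x i) := by
  induction d with
  | zero => simp [pre, dsts]
  | succ d ih =>
    push_cast
    rw [← add_assoc, forced_succ hk, ih, pre_add, dsts_append]
    simp [pre, dsts, tail]

/-- The letter written at offset `j` while processing `x_{i+d}` is a letter of the infinite
output from the state forced at `i`. -/
theorem hmap_forced (hα : Annotation L α) (hk : SyncAt L k) (x : FullShift n) (i : ℤ)
    (d j : ℕ) (hj : j < (outAt L k x (i + d)).length) :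
    0 ≤ (i + d) + α (forced L k x (i + d)) + j - i - α (forced L k x i) ∧
    hmap L (forced L k x i) (tail x i)
      ((i + d) + α (forced L k x (i + d)) + j - i - α (forced L k x i)).toNat =
        (outAt L k x (i + d)).getD j default := by
  have h1 := hα (forced L k x i) (pre (tail x i) d)
  rw [← forced_add hk] at h1
  have h2 : (pre (tail x i) d).length = d := by simp [pre]
  rw [h2] at h1
  have h3 : (i + d) + α (forced L k x (i + d)) + j - i - α (forced L k x i) =
      (((outs L (pre (tail x i) d) (forced L k x i)).length + j : ℕ) : ℤ) := by
    push_cast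
    omega
  have h4 : outs L (pre (tail x i) (d + 1)) (forced L k x i) =
      outs L (pre (tail x i) d) (forced L k x i) ++ outAt L k x (i + d) := by
    rw [pre_add, outs_append, ← forced_add hk]
    simp [pre, tail, outs, outAt]
  rw [h3]
  refine ⟨by positivity, ?_⟩
  rw [Int.toNat_natCast, hmap_eq (k := d + 1) (by rw [h4, List.length_append]; omega), h4,
    List.getD_append_right _ _ _ _ (by omega)]
  simp

/-- The output words cover every coordinate: consecutive words occupy consecutive intervals, and
the starting points are unbounded in both directions as the annotation is bounded. -/
theorem exists_cover (hα : Annotation L α) (hk : SyncAt L k) (x : FullShift n) (m : ℤ) :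
    ∃ p : ℤ × ℕ, p.2 < (outAt L k x p.1).length ∧
      p.1 + α (forced L k x p.1) + (p.2 : ℤ) = m := by
  classical
  obtain ⟨C, hC⟩ := Annotation.bounded α
  have hC' := fun i => abs_le.1 (hC (forced L k x i))
  have hex : ∃ t : ℕ, m < (m - C + t) + α (forced L k x (m - C + t)) := by
    refine ⟨(2 * C + 1).toNat, ?_⟩
    have := hC' (m - C + ((2 * C + 1).toNat : ℕ))
    omega
  have hs := Nat.find_spec hex
  have hm := fun t => Nat.find_min hex (m := t)
  generalize Nat.find hex = t at hs hm
  rcases t with _ | t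
  · have := hC' (m - C + (0 : ℕ))
    omega
  · have h1 := hm t (by omega)
    have h2 := hα (forced L k x (m - C + t)) [x (m - C + t)]
    simp only [dsts, outs, List.append_nil, List.length_singleton] at h2
    rw [← forced_succ hk] at h2
    have e : m - C + ((t + 1 : ℕ) : ℤ) = m - C + t + 1 := by push_cast; ring
    rw [e, h2] at hs
    refine ⟨(m - C + t, (m - ((m - C + t) + α (forced L k x (m - C + t)))).toNat), ?_, ?_⟩
    · simp only [outAt]
      omega
    · simp only
      omega

theorem inducedMap_eq (hα : Annotation L α) (hk : SyncAt L k) (x : FullShift n) (m : ℤ) :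
    ∃ i₀ : ℤ, ∀ i ≤ i₀, 0 ≤ m - i - α (forced L k x i) ∧ inducedMap L α k x m =
      hmap L (forced L k x i) (tail x i) (m - i - α (forced L k x i)).toNat := by
  have hex := exists_cover hα hk x m
  have e : inducedMap L α k x m =
      (outAt L k x hex.choose.1).getD hex.choose.2 default := by
    unfold inducedMap
    rw [dif_pos hex]
  obtain ⟨h1, h2⟩ := hex.choose_spec
  rw [e]
  generalize hex.choose = p at h1 h2
  refine ⟨p.1, fun i hi => ?_⟩
  obtain ⟨d, hd⟩ := Int.le.dest hi
  rw [← hd] at h1 h2 ⊢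
  have := hmap_forced hα hk x i d p.2 h1
  rw [h2] at this
  exact ⟨this.1, this.2.symm⟩

end Shift


/-- Let `P` be a strongly synchronizing core transducer satisfying SL3
(all of whose states have finite extent of incomplete response), let `β` be the canonical
annotation of `P` (the unique annotation taking the value `0` at the state forced by the
lexicographically least word `0^k` of synchronizing length), and let `[P]` be the minimal
representative of `P`, with `κ : Q_P → Q_{[P]}` the induced map on states.  Then the map
`α : Q_{[P]} → ℤ` defined by `α ((q) κ) = |Λ(ε, q)| + β q` is a well-defined annotation
of `[P]`, and the induced maps `([P], α)` and `(P, β)` on `X_n^ℤ` are equal. -/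
theorem minRep_annotation (n : ℕ) (P : Transducer n)
    (h0 : CircuitsNonempty P) (h1 : StronglySync P) (h2 : IsCore P) (h3 : SL3 P)
    (hfin : ∀ q : P.Q, FiniteExtent P q)
    (β : P.Q → ℤ) (hβ : Annotation P β)
    (hβ0 : β (dsts P (List.replicate (syncLevel P) 0) (Classical.choice P.ne)) = 0) :
    ∃ α : (minRep P).Q → ℤ,
      (∀ q : P.Q, α (kappa P q) = (extentLen P q : ℤ) + β q) ∧
      Annotation (minRep P) α ∧
      ∀ k k' : ℕ, SyncAt (minRep P) k → SyncAt P k' →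
        inducedMap (minRep P) α k = inducedMap P β k' := by
  have hP := hβ.unb
  have hRα := annotation_removeIncomplete hfin hβ
  have hN := noIncomplete_removeIncomplete hP hfin
  have hM := isMor_kappa h2 hRα.unb hN
  have hS : StronglySync (removeIncomplete P) := by
    obtain ⟨k, hk⟩ := h1
    exact ⟨k, syncAt_removeIncomplete.2 hk⟩
  have hwd : ∀ p q : P.Q, kappa P p = kappa P q →
      (extentLen P p : ℤ) + β p = (extentLen P q : ℤ) + β q := fun p q h =>
    hRα.eq_of_hmap_eq hN hS ((kappa_eq_iff h2 p q).1 h)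
  let α : (minRep P).Q → ℤ := fun c => (extentLen P (rep c) : ℤ) + β (rep c)
  have hα : ∀ q : P.Q, α (kappa P q) = (extentLen P q : ℤ) + β q := fun q =>
    hwd _ _ (kappa_rep h2 _)
  have hdsts : ∀ (w : Word n) (q : P.Q),
      dsts (minRep P) w (kappa P q) = kappa P (dsts P w q) := by
    intro w q
    have e := hM.dsts w (toR P q)
    rwa [dsts_removeIncomplete, ofR_toR, ofR_toR] at e
  have hann : Annotation (minRep P) α := by
    intro c w
    rw [← kappa_rep h2 c]
    have e1 := hM.outs w (toR P (rep c))
    have e2 := hRα (toR P (rep c)) w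
    simp only [dsts_removeIncomplete, ofR_toR] at e1 e2
    rw [hdsts, hα, hα, e1, e2]
  refine ⟨α, hα, hann, fun k k' hk hk' => ?_⟩
  -- `κ` maps states forced in `P` to states forced in `[P]`, whatever the two levels are.
  have hforced : ∀ (x : FullShift n) (i : ℤ),
      forced (minRep P) k x i = kappa P (forced P k' x i) := by
    intro x i
    have e := forced_add hk' x (i - k) k
    rw [sub_add_cancel] at e
    have ew : pre (tail x (i - k)) k = window x i k := (window_eq x i k).symm
    rw [e, ← hdsts, ew]
    exact hk _ (by simp [window_eq]) _ _
  funext x m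
  obtain ⟨i₁, H1⟩ := inducedMap_eq hann hk x m
  obtain ⟨i₂, H2⟩ := inducedMap_eq hβ hk' x m
  obtain ⟨a1, e1⟩ := H1 _ (min_le_left i₁ i₂)
  obtain ⟨a2, e2⟩ := H2 _ (min_le_right i₁ i₂)
  rw [e1, e2]
  rw [hforced, hα (forced P k' x (min i₁ i₂))] at a1 ⊢
  have e3 := hM.hmap (toR P (forced P k' x (min i₁ i₂)))
  rw [ofR_toR] at e3
  rw [e3, hmap_removeIncomplete hP hfin]
  congr 1
  omega

end ShiftPaper
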